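/- arXiv:2301.13440 — 4 statements merged into one kernel-verified Lean document; each statement's English description precedes it below -/
import Mathlib

section
/- Let Y be a finite group, X ≤ Y a subgroup of index 2, and θ ∈ Irr(X) with θ̄ ≠ θ and θ^y = θ̄ for some y ∈ Y∖X. Then the induced character θ^Y is a real-valued irreducible character of Y, and its Frobenius–Schur indicator satisfies ε(θ^Y) = (1/|X|) ∑_{s ∈ Y∖X} θ(s²). -/
open scoped BigOperators
attribute [local instance] Classical.propDecidable

noncomputable section

/-- `χ` is an irreducible complex character of the group `G`. -/
def IsIrrChar (G : Type) [Group G] (χ : G → ℂ) : Prop :=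
  ∃ V : FDRep ℂ G, CategoryTheory.Simple V ∧ χ = V.character

/-- Frobenius–Schur indicator of a class function. -/
def FS (G : Type) [Group G] [Fintype G] (χ : G → ℂ) : ℂ :=
  (∑ g : G, χ (g ^ 2)) / (Fintype.card G : ℂ)

/-- The character of `G` induced from a character of the subgroup `H`. -/
def indChar {G : Type} [Group G] [Fintype G] (H : Subgroup G) (θ : ↥H → ℂ) : G → ℂ :=
  fun g => (∑ s : G, if h : s * g * s⁻¹ ∈ H then θ ⟨s * g * s⁻¹, h⟩ else 0) / (Nat.card H : ℂ)

/-- The conjugate character `θ^g : n ↦ θ (g n g⁻¹)` of a character of a subgroup `H`. -/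
def conjChar {G : Type} [Group G] (H : Subgroup G) (θ : ↥H → ℂ) (g : G) : ↥H → ℂ :=
  fun n => if h : g * (n : G) * g⁻¹ ∈ H then θ ⟨g * (n : G) * g⁻¹, h⟩ else 0

/-- The complex conjugate character. -/
def starChar {α : Type} (θ : α → ℂ) : α → ℂ := fun a => (starRingEnd ℂ) (θ a)


open CategoryTheory ComplexOrder in
theorem aux_char_inv {G : Type} [Group G] [Fintype G] (V : FDRep ℂ G) (x : G) :
    V.character x⁻¹ = (starRingEnd ℂ) (V.character x) := by
  classical
  let b := Module.finBasis ℂ V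
  let A : G → Matrix _ _ ℂ := fun g => LinearMap.toMatrix b b (V.ρ g)
  have hA1 : A 1 = 1 := by simp [A]
  have hAm : ∀ g h, A (g * h) = A g * A h := by
    intro g h; simp only [A, map_mul]; exact LinearMap.toMatrix_mul b _ _
  have hch : ∀ g, V.character g = (A g).trace := by
    intro g; exact LinearMap.trace_eq_matrix_trace ℂ b _
  let H : Matrix _ _ ℂ := ∑ g : G, (A g).conjTranspose * A g
  have hH : H.PosDef := by
    have : H = (1 : Matrix _ _ ℂ) + ∑ g ∈ Finset.univ.erase (1 : G), (A g).conjTranspose * A g := by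
      simp only [H]
      rw [← Finset.add_sum_erase _ _ (Finset.mem_univ (1 : G)), hA1]; simp
    rw [this]
    refine Matrix.PosDef.add_posSemidef Matrix.PosDef.one ?_
    exact Matrix.posSemidef_sum _ fun g _ => Matrix.posSemidef_conjTranspose_mul_self _
  have hinv : (A x).conjTranspose * H * A x = H := by
    simp only [H, Finset.mul_sum, Finset.sum_mul]
    refine Fintype.sum_equiv (Equiv.mulRight x) _ _ fun g => ?_
    simp [hAm, Matrix.conjTranspose_mul, Matrix.mul_assoc]
  have hu : IsUnit H.det := (Matrix.isUnit_iff_isUnit_det _).1 hH.isUnit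
  have hx : A x * A x⁻¹ = 1 := by rw [← hAm, mul_inv_cancel, hA1]
  have h2 : (A x).conjTranspose * H = H * A x⁻¹ := by
    calc _ = (A x).conjTranspose * H * (A x * A x⁻¹) := by rw [hx, Matrix.mul_one]
      _ = (A x).conjTranspose * H * A x * A x⁻¹ := by simp only [Matrix.mul_assoc]
      _ = _ := by rw [hinv]
  have h3 : A x⁻¹ = H⁻¹ * ((A x).conjTranspose * H) := by
    rw [h2, ← Matrix.mul_assoc, Matrix.nonsing_inv_mul _ hu, Matrix.one_mul]
  rw [hch, hch, h3, Matrix.trace_mul_comm, Matrix.mul_assoc, Matrix.mul_nonsing_inv _ hu,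
    Matrix.mul_one, Matrix.trace_conjTranspose]
  rfl

open CategoryTheory ComplexOrder in
theorem aux_FS_zero {G : Type} [Group G] [Fintype G] (V : FDRep ℂ G) [Simple V]
    (h : ∃ g, (starRingEnd ℂ) (V.character g) ≠ V.character g) :
    ∑ g : G, V.character (g ^ 2) = 0 := by
  classical
  have hne : (Nat.card G : ℂ) ≠ 0 := by exact_mod_cast Nat.card_pos.ne'
  let _ := invertibleOfNonzero hne
  let D : FDRep ℂ G := FDRep.of (Representation.dual V.ρ)
  have hD : ∀ g, D.character g = V.character g⁻¹ := fun g => FDRep.char_dual V g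
  have : Simple D := by
    rw [FDRep.simple_iff_char_is_norm_one]
    simp only [hD]
    rw [← (FDRep.simple_iff_char_is_norm_one V).1 inferInstance]
    exact Fintype.sum_equiv (Equiv.inv G) _ _ fun g => by simp
  have ho := FDRep.char_orthonormal D V
  rw [if_neg] at ho
  swap
  · rintro ⟨i⟩
    obtain ⟨g, hg⟩ := h
    apply hg
    rw [← aux_char_inv, ← hD, FDRep.char_iso i]
  let L : FDRep ℂ G := FDRep.of (Representation.linHom V.ρ D.ρ)
  have hL := FDRep.average_char_eq_finrank_invariants L
  have hLc : ∀ g, L.character g = D.character g * V.character g⁻¹ := by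
    intro g; rw [mul_comm]; exact FDRep.char_linHom V D g
  simp only [hLc] at hL
  rw [ho] at hL
  have hf : Module.finrank ℂ (Representation.invariants (Representation.linHom V.ρ D.ρ)) = 0 := by
    exact_mod_cast hL.symm
  have hbot := Submodule.finrank_eq_zero.1 hf
  let b := Module.finBasis ℂ V
  have key : ∀ f : V →ₗ[ℂ] Module.Dual ℂ V, ∀ v w : V,
      ∑ g : G, f (V.ρ g v) (V.ρ g w) = 0 := by
    intro f v w
    have hm : (∑ g : G, Representation.linHom V.ρ D.ρ g f) ∈
        Representation.invariants (Representation.linHom V.ρ D.ρ) := by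
      intro x
      rw [map_sum]
      refine Fintype.sum_equiv (Equiv.mulLeft x) _ _ fun g => ?_
      simp only [Equiv.coe_mulLeft, map_mul]; rfl
    rw [hbot, Submodule.mem_bot] at hm
    have h2 := congrArg (fun (F : V →ₗ[ℂ] Module.Dual ℂ V) => F v w) hm
    have h3 : ∑ g : G, f (V.ρ g⁻¹ v) (V.ρ g⁻¹ w) = 0 := by
      have e : ∀ F : G → (V →ₗ[ℂ] Module.Dual ℂ V), (∑ g, F g) v w = ∑ g, F g v w := by
        intro F; simp [LinearMap.sum_apply]
      exact (e _).symm.trans h2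
    rw [← h3]
    exact Fintype.sum_equiv (Equiv.inv G) _ _ fun g => by simp
  have hch : ∀ g, V.character (g ^ 2) =
      ∑ i, ∑ j, b.repr (V.ρ g (b j)) i * b.repr (V.ρ g (b i)) j := by
    intro g
    have : V.character (g ^ 2) = (LinearMap.toMatrix b b (V.ρ (g^2))).trace :=
      LinearMap.trace_eq_matrix_trace ℂ b _
    rw [this, pow_two, map_mul, LinearMap.toMatrix_mul, Matrix.trace]
    simp [Matrix.mul_apply, LinearMap.toMatrix_apply]
  simp only [hch]
  rw [Finset.sum_comm]
  refine Finset.sum_eq_zero fun i _ => ?_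
  rw [Finset.sum_comm]
  refine Finset.sum_eq_zero fun j _ => ?_
  have := key ((b.coord i).smulRight (b.coord j)) (b j) (b i)
  simpa using this

/-- Extension by zero of a representation of a subgroup. -/
def auxR {Y : Type} [Group Y] (X : Subgroup Y) {V : Type} [AddCommGroup V] [Module ℂ V]
    (ρ : X →* (V →ₗ[ℂ] V)) (g : Y) : V →ₗ[ℂ] V :=
  if h : g ∈ X then ρ ⟨g, h⟩ else 0

theorem auxR_mul {Y : Type} [Group Y] (X : Subgroup Y) (hX : X.index = 2)
    {V : Type} [AddCommGroup V] [Module ℂ V]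
    (ρ : X →* (V →ₗ[ℂ] V)) (y : Y) (hy : y ∉ X) (g h : Y) :
    auxR X ρ (g * h) = auxR X ρ g ∘ₗ auxR X ρ h + auxR X ρ (g * y⁻¹) ∘ₗ auxR X ρ (y * h) := by
  have hy' : y⁻¹ ∉ X := by simpa using hy
  have e1 : (g * y⁻¹ ∈ X) ↔ ¬ (g ∈ X) := by
    rw [Subgroup.mul_mem_iff_of_index_two hX]; tauto
  have e2 : (y * h ∈ X) ↔ ¬ (h ∈ X) := by
    rw [Subgroup.mul_mem_iff_of_index_two hX]; tauto
  have e3 := Subgroup.mul_mem_iff_of_index_two hX (a := g) (b := h)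
  by_cases hg : g ∈ X <;> by_cases hh : h ∈ X
  · have : (⟨g * h, X.mul_mem hg hh⟩ : X) = ⟨g, hg⟩ * ⟨h, hh⟩ := rfl
    simp only [auxR, e1, e2, e3, hg, hh, iff_self, dite_true, not_true, dite_false, this, map_mul]
    simp [Module.End.mul_eq_comp]
  · simp [auxR, e1, e2, e3, hg, hh]
  · simp [auxR, e1, e2, e3, hg, hh]
  · have h1 := e1.2 hg
    have h2 := e2.2 hh
    have h3 := e3.2 (by tauto)
    have : (⟨g * h, h3⟩ : X) = ⟨g * y⁻¹, h1⟩ * ⟨y * h, h2⟩ := by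
      ext; simp
    simp only [auxR, dif_pos h1, dif_pos h2, dif_pos h3, dif_neg hg, this, map_mul]
    simp [Module.End.mul_eq_comp]

/-- The induced representation from an index two subgroup on `V × V`. -/
def auxInd {Y : Type} [Group Y] (X : Subgroup Y) (hX : X.index = 2)
    {V : Type} [AddCommGroup V] [Module ℂ V]
    (ρ : X →* (V →ₗ[ℂ] V)) (y : Y) (hy : y ∉ X) : Y →* ((V × V) →ₗ[ℂ] (V × V)) where
  toFun g := LinearMap.prod
    (LinearMap.coprod (auxR X ρ g) (auxR X ρ (g * y⁻¹)))
    (LinearMap.coprod (auxR X ρ (y * g)) (auxR X ρ (y * g * y⁻¹)))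
  map_one' := by
    have h1 : (⟨1, X.one_mem⟩ : X) = 1 := rfl
    refine LinearMap.ext fun v => ?_
    simp [auxR, hy, X.one_mem, h1]
  map_mul' g h := by
    have H := auxR_mul X hX ρ y hy
    refine LinearMap.ext fun v => ?_
    have a1 := H g h
    have a2 := H g (h * y⁻¹)
    have a3 := H (y * g) h
    have a4 := H (y * g) (h * y⁻¹)
    simp only [← mul_assoc] at a1 a2 a3 a4 ⊢
    rw [a1, a2, a3, a4]
    ext <;> simp <;> abel

theorem auxInd_trace {Y : Type} [Group Y] (X : Subgroup Y) (hX : X.index = 2)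
    {V : Type} [AddCommGroup V] [Module ℂ V] [FiniteDimensional ℂ V]
    (ρ : X →* (V →ₗ[ℂ] V)) (y : Y) (hy : y ∉ X) (g : Y) :
    LinearMap.trace ℂ (V × V) (auxInd X hX ρ y hy g) =
      LinearMap.trace ℂ V (auxR X ρ g) + LinearMap.trace ℂ V (auxR X ρ (y * g * y⁻¹)) := by
  have : auxInd X hX ρ y hy g =
      LinearMap.prodMap (auxR X ρ g) (auxR X ρ (y * g * y⁻¹))
      + LinearMap.inl ℂ V V ∘ₗ (auxR X ρ (g * y⁻¹) ∘ₗ LinearMap.snd ℂ V V)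
      + LinearMap.inr ℂ V V ∘ₗ (auxR X ρ (y * g) ∘ₗ LinearMap.fst ℂ V V) := by
    refine LinearMap.ext fun v => ?_
    ext <;> simp [auxInd, add_comm]
  rw [this, map_add, map_add, LinearMap.trace_prodMap', LinearMap.trace_comp_comm' (g := LinearMap.inl ℂ V V),
    LinearMap.trace_comp_comm' (g := LinearMap.inr ℂ V V), LinearMap.comp_assoc, LinearMap.comp_assoc,
    LinearMap.snd_comp_inl, LinearMap.fst_comp_inr]
  simp

/-- Extension by zero of a function. -/
def auxExt {Y : Type} [Group Y] (X : Subgroup Y) (θ : X → ℂ) (g : Y) : ℂ :=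
  if h : g ∈ X then θ ⟨g, h⟩ else 0

theorem aux_indChar {Y : Type} [Group Y] [Fintype Y] (X : Subgroup Y) (hX : X.index = 2)
    (θ : ↥X → ℂ) (hθ : ∀ a b, θ (a * b * a⁻¹) = θ b) (y : Y) (hy : y ∉ X) (g : Y) :
    indChar X θ g = auxExt X θ g + auxExt X θ (y * g * y⁻¹) := by
  have hn : X.Normal := Subgroup.normal_of_index_eq_two hX
  have hne : (Nat.card X : ℂ) ≠ 0 := by exact_mod_cast Nat.card_pos.ne'
  have hc : ∀ a ∈ X, ∀ g, auxExt X θ (a * g * a⁻¹) = auxExt X θ g := by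
    intro a ha g
    by_cases h : g ∈ X
    · have h' := hn.conj_mem g h a
      simp only [auxExt, dif_pos h, dif_pos h']
      exact hθ ⟨a, ha⟩ ⟨g, h⟩
    · have h' : a * g * a⁻¹ ∉ X := by
        intro h'; apply h
        have := hn.conj_mem _ h' a⁻¹
        simpa [mul_assoc] using this
      simp only [auxExt, dif_neg h, dif_neg h']
  have hs : ∀ s : Y, auxExt X θ (s * g * s⁻¹) =
      if s ∈ X then auxExt X θ g else auxExt X θ (y * g * y⁻¹) := by
    intro s
    split_ifs with h
    · exact hc s h g
    · have : s * y⁻¹ ∈ X := by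
        rw [Subgroup.mul_mem_iff_of_index_two hX]; simp [h, hy]
      rw [← hc _ this (y * g * y⁻¹)]
      congr 1; group
  have hcard : (Finset.univ.filter (fun s : Y => s ∈ X)).card = Nat.card X := by
    rw [Nat.card_eq_fintype_card, Fintype.card_subtype]
  have hcard2 : (Finset.univ.filter (fun s : Y => s ∉ X)).card = Nat.card X := by
    have h1 := Finset.card_filter_add_card_filter_not (s := (Finset.univ : Finset Y)) (fun s : Y => s ∈ X)
    have h2 := X.card_mul_index
    rw [hX, Nat.card_eq_fintype_card (α := Y)] at h2
    rw [Finset.card_univ] at h1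
    omega
  show (∑ s : Y, auxExt X θ (s * g * s⁻¹)) / (Nat.card X : ℂ) = _
  rw [Finset.sum_congr rfl fun s _ => hs s, Finset.sum_ite, Finset.sum_const, Finset.sum_const, hcard, hcard2, nsmul_eq_mul,
    nsmul_eq_mul, ← mul_add, mul_div_cancel_left₀ _ hne]

theorem aux_sum_ext {Y : Type} [Group Y] [Fintype Y] (X : Subgroup Y) (F : Y → ℂ)
    (hF : ∀ g, g ∉ X → F g = 0) : ∑ g, F g = ∑ x : X, F x := by
  rw [← Finset.sum_subset (Finset.subset_univ (Finset.univ.filter (fun g => g ∈ X)))]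
  · exact (Finset.sum_subtype _ (by simp) F)
  · intro g _ hg; exact hF g (by simpa using hg)

/-- If `X ≤ Y` has index 2, `θ ∈ Irr(X)` with `θ̄ ≠ θ` and `θ^y = θ̄` for some
`y ∈ Y∖X`, then `θ^Y` is a real-valued irreducible character of `Y` and
`ε(θ^Y) = (1/|X|) ∑_{s ∈ Y∖X} θ(s²)`. -/
theorem stmt5 {Y : Type} [Group Y] [Fintype Y] (X : Subgroup Y) (hX : X.index = 2)
    (θ : ↥X → ℂ) (hθ : IsIrrChar ↥X θ) (hnr : starChar θ ≠ θ)
    (y : Y) (hy : y ∉ X) (hconj : conjChar X θ y = starChar θ) :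
    IsIrrChar Y (indChar X θ) ∧
    (∀ g : Y, (starRingEnd ℂ) (indChar X θ g) = indChar X θ g) ∧
    FS Y (indChar X θ) =
      (∑ s ∈ Finset.univ.filter (fun s : Y => s ∉ X),
        θ ⟨s ^ 2, Subgroup.sq_mem_of_index_two hX s⟩) / (Nat.card X : ℂ) := by
  obtain ⟨V, hV, hVc⟩ := hθ
  have hn : X.Normal := Subgroup.normal_of_index_eq_two hX
  have hcl : ∀ a b, θ (a * b * a⁻¹) = θ b := by
    intro a b; rw [hVc]; exact V.char_conj b a
  have hind := aux_indChar X hX θ hcl y hy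
  have hcardY : (Nat.card Y : ℂ) = Nat.card X * 2 := by
    have := X.card_mul_index
    rw [hX] at this
    exact_mod_cast this.symm
  have hne : (Nat.card X : ℂ) ≠ 0 := by exact_mod_cast Nat.card_pos.ne'
  let _ := invertibleOfNonzero hne
  -- conjugation by `y` on `X`
  let c : X ≃* X := MulAut.conjNormal y
  have hc : ∀ x : X, ((c x : X) : Y) = y * x * y⁻¹ := fun x => MulAut.conjNormal_apply y x
  have hst : ∀ x : X, θ (c x) = (starRingEnd ℂ) (θ x) := by
    intro x
    have := congrFun hconj x
    have hm : y * (x : Y) * y⁻¹ ∈ X := hn.conj_mem _ x.2 y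
    simp only [conjChar, dif_pos hm, starChar] at this
    rw [← this]
    congr 1
  have hex : ∀ x : X, auxExt X θ x = θ x := fun x => by simp [auxExt]
  have hex' : ∀ g, g ∉ X → auxExt X θ g = 0 := fun g hg => by simp [auxExt, hg]
  have hin : ∀ x : X, indChar X θ x = θ x + θ (c x) := by
    intro x; rw [hind, hex, ← hc, hex]
  have hout : ∀ g, g ∉ X → indChar X θ g = 0 := by
    intro g hg
    rw [hind, hex' g hg, hex', add_zero]
    intro h'; apply hg
    have := hn.conj_mem _ h' y⁻¹
    simpa [mul_assoc] using this
  have hN := (FDRep.simple_iff_char_is_norm_one V).1 hV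
  rw [← hVc] at hN
  refine ⟨?_, ?_, ?_⟩
  · let W : FDRep ℂ Y := FDRep.of (auxInd X hX V.ρ y hy)
    have hW : W.character = indChar X θ := by
      funext g
      rw [hind]
      refine (auxInd_trace X hX V.ρ y hy g).trans ?_
      have : ∀ g, LinearMap.trace ℂ V (auxR X V.ρ g) = auxExt X θ g := by
        intro g
        unfold auxR auxExt
        split_ifs
        · rw [hVc]; rfl
        · simp
      rw [this, this]
    refine ⟨W, ?_, hW.symm⟩
    rw [FDRep.simple_iff_char_is_norm_one, hW]
    rw [aux_sum_ext X _ (fun g hg => by rw [hout g hg, zero_mul])]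
    -- the conjugate representation
    let V' : FDRep ℂ X := FDRep.of (V.ρ.comp c.toMonoidHom)
    have hV' : ∀ x, V'.character x = θ (c x) := by intro x; rw [hVc]; rfl
    have hN' : ∑ x : X, θ (c x) * θ (c x⁻¹) = Nat.card X := by
      rw [← hN]
      exact Fintype.sum_equiv c.toEquiv _ _ fun g => by simp
    have hS' : CategoryTheory.Simple V' := by
      rw [FDRep.simple_iff_char_is_norm_one]
      simpa only [hV'] using hN'
    have hno : ¬ Nonempty (V ≅ V') := by
      rintro ⟨i⟩
      apply hnr
      funext x
      show (starRingEnd ℂ) (θ x) = θ x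
      rw [← hst, ← hV', ← FDRep.char_iso i, hVc]
    have hno' : ¬ Nonempty (V' ≅ V) := fun ⟨i⟩ => hno ⟨i.symm⟩
    have o1 := FDRep.char_orthonormal V V'
    have o2 := FDRep.char_orthonormal V' V
    rw [if_neg hno] at o1
    rw [if_neg hno'] at o2
    simp only [hV', ← hVc, mul_eq_zero, inv_eq_zero, hne, false_or] at o1 o2
    have hinv : ∀ x : X, indChar X θ ((x : Y)⁻¹) = θ x⁻¹ + θ (c x⁻¹) := fun x => by
      rw [← hin]; rfl
    simp only [hin, hinv, add_mul, mul_add, Finset.sum_add_distrib, hN, hN', o1, o2]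
    rw [hcardY]; ring
  · intro g
    by_cases hg : g ∈ X
    · have := hin ⟨g, hg⟩
      simp only at this
      rw [this, hst, map_add, Complex.conj_conj, add_comm]
    · rw [hout g hg, map_zero]
  · have hex0 : ∃ g, (starRingEnd ℂ) (V.character g) ≠ V.character g := by
      by_contra hcon
      push Not at hcon
      apply hnr
      funext x
      show (starRingEnd ℂ) (θ x) = θ x
      rw [hVc, hcon]
    have h0 := aux_FS_zero V hex0
    rw [← hVc] at h0
    have hsq : ∀ g : Y, g ^ 2 ∈ X := fun g => Subgroup.sq_mem_of_index_two hX g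
    have hsum : ∑ g : Y, indChar X θ (g ^ 2) = 2 * ∑ g : Y, θ ⟨g ^ 2, hsq g⟩ := by
      have : ∀ g : Y, indChar X θ (g ^ 2) = θ ⟨g ^ 2, hsq g⟩ + θ (c ⟨g ^ 2, hsq g⟩) :=
        fun g => hin ⟨g ^ 2, hsq g⟩
      simp only [this, Finset.sum_add_distrib]
      rw [two_mul]
      congr 1
      refine Fintype.sum_equiv (MulAut.conj y).toEquiv _ _ fun g => ?_
      congr 1
      ext
      rw [hc]
      simp [pow_two, mul_assoc]
    have hsplit : ∑ g : Y, θ ⟨g ^ 2, hsq g⟩ =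
        ∑ g ∈ Finset.univ.filter (fun s : Y => s ∉ X), θ ⟨g ^ 2, hsq g⟩ := by
      rw [← Finset.sum_filter_add_sum_filter_not Finset.univ (fun s : Y => s ∈ X)]
      rw [Finset.sum_subtype (p := fun s => s ∈ X) _ (by simp)]
      have : ∑ x : X, θ ⟨(x : Y) ^ 2, hsq x⟩ = 0 := h0
      rw [this, zero_add]
    unfold FS
    rw [hsum, hsplit, ← Nat.card_eq_fintype_card, hcardY]
    field_simp
end
end

section
/- Let H be a finite group with a normal subgroup N of odd order such that |H : N| = 2, let x ∈ H be an involution, and let θ ∈ Irr(N) satisfy θ^x = θ̄ ≠ θ. Then the Frobenius–Schur indicator of the induced character θ^H satisfies ε(θ^H) = (1/|C_N(x)|) ∑_{y ∈ C_N(x)} θ(y); in particular this sum is a real number. -/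
open scoped BigOperators
attribute [local instance] Classical.propDecidable

noncomputable section

theorem aux_sum_zero {G : Type} [Group G] [Fintype G] (θ : G → ℂ) (hθ : IsIrrChar G θ)
    (hnr : starChar θ ≠ θ) : ∑ g : G, θ g = 0 := by
  obtain ⟨V, hV, rfl⟩ := hθ
  let W : FDRep ℂ G := FDRep.of (Representation.trivial ℂ G ℂ)
  have hW : ∀ g, W.character g = 1 := by
    intro g
    have : W.ρ g = 1 := by
      simp only [W, FDRep.of_ρ']
      ext; simp
    rw [FDRep.character, this, LinearMap.trace_one]
    change ((Module.finrank ℂ ℂ : ℕ) : ℂ) = 1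
    simp
  have hc : (Nat.card G : ℂ) ≠ 0 := by
    exact_mod_cast Nat.card_pos.ne'
  haveI : Invertible (Nat.card G : ℂ) := invertibleOfNonzero hc
  haveI : CategoryTheory.Simple W := by
    rw [FDRep.simple_iff_char_is_norm_one]
    simp [hW]
  have h := FDRep.char_orthonormal V W
  have hn : ¬ Nonempty (V ≅ W) := by
    rintro ⟨i⟩
    apply hnr
    funext g
    simp [starChar, FDRep.char_iso i, hW]
  rw [if_neg hn] at h
  simpa [hW, hc] using h

theorem aux_class {G : Type} [Group G] (θ : G → ℂ) (hθ : IsIrrChar G θ) (g h : G) :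
    θ (h * g * h⁻¹) = θ g := by
  obtain ⟨V, hV, rfl⟩ := hθ
  exact FDRep.char_conj V g h

/-- Extension by zero. -/
def ext0 {G : Type} [Group G] (N : Subgroup G) (θ : ↥N → ℂ) (g : G) : ℂ :=
  if h : g ∈ N then θ ⟨g, h⟩ else 0

/-- In a group of odd order, every element has a square root among its powers. -/
theorem aux_root {H : Type} [Group H] (N : Subgroup H) (hodd : Odd (Nat.card N)) :
    ∃ k : ℕ, ∀ w ∈ N, (w ^ k) ^ 2 = w := by
  obtain ⟨k, hk⟩ := hodd
  refine ⟨k + 1, fun w hw => ?_⟩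
  have h1 : w ^ Nat.card N = 1 := by
    have := pow_card_eq_one' (G := N) (x := ⟨w, hw⟩)
    exact congrArg Subtype.val this
  rw [← pow_mul, show (k + 1) * 2 = Nat.card N + 1 by omega, pow_succ, h1, one_mul]

theorem aux_pow_card {H : Type} [Group H] (N : Subgroup H) (w : H) (hw : w ∈ N) :
    w ^ Nat.card N = 1 := by
  have := pow_card_eq_one' (G := N) (x := ⟨w, hw⟩)
  exact congrArg Subtype.val this

theorem aux_odd_pow {H : Type} [Group H] {m : ℕ} (hodd : Odd m) (u : H) (hu : u ^ 2 = 1) :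
    u ^ m = u := by
  obtain ⟨k, rfl⟩ := hodd
  rw [pow_succ, pow_mul, hu, one_pow, one_mul]

/-- Involutions outside `N` are `N`-conjugate. -/
theorem aux_conj {H : Type} [Group H] (N : Subgroup H)
    (hodd : Odd (Nat.card N)) (hidx : N.index = 2)
    (x : H) (hx2 : x ^ 2 = 1) (hxN : x ∉ N) (z : H) (hz2 : z ^ 2 = 1) (hzN : z ∉ N) :
    ∃ v ∈ N, v * x * v⁻¹ = z := by
  obtain ⟨k, hk⟩ := aux_root N hodd
  have hw : z * x ∈ N := by
    rw [Subgroup.mul_mem_iff_of_index_two hidx]; tauto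
  refine ⟨(z * x) ^ k, N.pow_mem hw k, ?_⟩
  have hxi : x⁻¹ = x := inv_eq_of_mul_eq_one_left (by rw [← sq, hx2])
  have hzi : z⁻¹ = z := inv_eq_of_mul_eq_one_left (by rw [← sq, hz2])
  have h1 : x * ((z * x) ^ k)⁻¹ * x⁻¹ = (z * x) ^ k := by
    rw [← inv_pow, ← conj_pow]
    congr 1
    rw [mul_inv_rev, hxi, hzi]
    have : x * x = 1 := by rw [← sq, hx2]
    rw [← mul_assoc, this, one_mul]
  have h2 : x * ((z * x) ^ k)⁻¹ = (z * x) ^ k * x := by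
    exact mul_inv_eq_iff_eq_mul.1 h1
  rw [mul_assoc, h2, ← mul_assoc, ← sq, hk _ hw, mul_assoc, ← sq, hx2, mul_one]

theorem aux_count {H : Type} [Group H] [Fintype H] (N : Subgroup H)
    (hodd : Odd (Nat.card N)) (hidx : N.index = 2)
    (x : H) (hx2 : x ^ 2 = 1) (hxN : x ∉ N) (h : H) (hh : h ∉ N) :
    (Finset.univ.filter (fun n : ↥N => (n : H) * x = x * (n : H))).card =
    (Finset.univ.filter (fun n : ↥N => ((n : H)⁻¹ * h * n) * x = x * ((n : H)⁻¹ * h * n))).card := by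
  have hz2 : (h ^ Nat.card N) ^ 2 = 1 := by
    rw [← pow_mul, mul_comm, pow_mul]
    exact aux_pow_card N _ (Subgroup.sq_mem_of_index_two hidx h)
  have hzN : h ^ Nat.card N ∉ N := by
    obtain ⟨k, hk⟩ := hodd
    rw [hk, pow_succ, pow_mul]
    intro hc
    exact hh ((N.mul_mem_cancel_left (N.pow_mem (Subgroup.sq_mem_of_index_two hidx h) k)).1 hc)
  obtain ⟨v, hvN, hv⟩ := aux_conj N hodd hidx x hx2 hxN _ hz2 hzN
  -- the second condition says that `n x n⁻¹ = h ^ |N|`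
  have key : ∀ n : H, n ∈ N →
      ((n⁻¹ * h * n) * x = x * (n⁻¹ * h * n) ↔ n * x * n⁻¹ = h ^ Nat.card N) := by
    intro n hn
    have e1 : (n⁻¹ * h * n) * x = x * (n⁻¹ * h * n) ↔ Commute h (n * x * n⁻¹) := by
      rw [commute_iff_eq]
      constructor
      · intro e
        calc h * (n * x * n⁻¹) = n * ((n⁻¹ * h * n) * x) * n⁻¹ := by group
          _ = n * x * n⁻¹ * h := by rw [e]; group
      · intro e
        calc (n⁻¹ * h * n) * x = n⁻¹ * (h * (n * x * n⁻¹)) * n := by group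
          _ = x * (n⁻¹ * h * n) := by rw [e]; group
    rw [e1]
    constructor
    · intro hc
      set u := n * x * n⁻¹ with hu
      have hu2 : u ^ 2 = 1 := by rw [hu, conj_pow, hx2]; group
      have huN : u ∉ N := by
        intro hc
        apply hxN
        have := N.mul_mem (N.mul_mem (N.inv_mem hn) hc) hn
        simpa [hu, mul_assoc] using this
      have hhu : h * u ∈ N := by
        rw [Subgroup.mul_mem_iff_of_index_two hidx]; tauto
      have e2 := aux_pow_card N _ hhu
      rw [hc.mul_pow, aux_odd_pow hodd u hu2] at e2
      have huu : u * u = 1 := by rw [← sq, hu2]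
      calc u = (h ^ Nat.card N * u) * u := by rw [e2, one_mul]
        _ = _ := by rw [mul_assoc, huu, mul_one]
    · intro e
      rw [e]
      exact Commute.self_pow h _
  refine Finset.card_bij' (fun n _ => ⟨v, hvN⟩ * n) (fun n _ => ⟨v, hvN⟩⁻¹ * n) ?_ ?_ ?_ ?_
  · intro n hn
    simp only [Finset.mem_filter, Finset.mem_univ, true_and] at hn ⊢
    rw [key _ (SetLike.coe_mem _), ← hv]
    push_cast
    calc v * n * x * (v * n)⁻¹ = v * ((n * x) * (n : H)⁻¹) * v⁻¹ := by group
      _ = _ := by rw [hn]; group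
  · intro n hn
    simp only [Finset.mem_filter, Finset.mem_univ, true_and] at hn ⊢
    rw [key _ (SetLike.coe_mem _), ← hv] at hn
    push_cast
    calc v⁻¹ * n * x = v⁻¹ * (n * x * (n : H)⁻¹) * n := by group
      _ = _ := by rw [hn]; group
  · intro n _; simp
  · intro n _; simp

theorem aux_key {H : Type} [Group H] [Fintype H] (N : Subgroup H)
    (hodd : Odd (Nat.card N)) (hidx : N.index = 2)
    (x : H) (hx2 : x ^ 2 = 1) (hxN : x ∉ N) (F : H → ℂ)
    (hF : ∀ n ∈ N, ∀ h, F (n * h * n⁻¹) = F h) :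
    ((Finset.univ.filter (fun n : ↥N => (n : H) * x = x * (n : H))).card : ℂ) *
      ∑ h ∈ Finset.univ.filter (fun h : H => h ∉ N), F h =
    (Nat.card N : ℂ) * ∑ n ∈ Finset.univ.filter (fun n : ↥N => (n : H) * x = x * (n : H)),
      F (n * x) := by
  have hT : ∑ n ∈ Finset.univ.filter (fun n : ↥N => (n : H) * x = x * (n : H)), F (n * x) =
      ∑ h ∈ Finset.univ.filter (fun h : H => h ∉ N), if h * x = x * h then F h else 0 := by
    rw [← Finset.sum_filter, Finset.filter_filter]
    have hxx : x * x = 1 := by rw [← sq, hx2]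
    refine Finset.sum_bij (fun n _ => (n : H) * x) ?_ ?_ ?_ ?_
    · intro n hn
      simp only [Finset.mem_filter, Finset.mem_univ, true_and] at hn ⊢
      refine ⟨fun hc => hxN ((N.mul_mem_cancel_left n.2).1 hc), ?_⟩
      rw [← mul_assoc, hn]
    · intro a _ b _ e
      exact Subtype.ext (mul_right_cancel e)
    · intro h hh
      simp only [Finset.mem_filter, Finset.mem_univ, true_and] at hh
      have hm : h * x ∈ N := by
        rw [Subgroup.mul_mem_iff_of_index_two hidx]; tauto
      refine ⟨⟨h * x, hm⟩, ?_, ?_⟩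
      · simp only [Finset.mem_filter, Finset.mem_univ, true_and]
        rw [← mul_assoc, ← hh.2]
      · simp only [mul_assoc, hxx, mul_one]
    · intro n _; rfl
  have h1 : ∀ n : N, (∑ h ∈ Finset.univ.filter (fun h : H => h ∉ N),
        if h * x = x * h then F h else 0) =
      ∑ h ∈ Finset.univ.filter (fun h : H => h ∉ N),
        if ((n : H)⁻¹ * h * n) * x = x * ((n : H)⁻¹ * h * n) then F h else 0 := by
    intro n
    symm
    have hmem : ∀ a ∈ N, ∀ h, h ∉ N → a * h * a⁻¹ ∉ N := by
      intro a ha h hh hc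
      apply hh
      have := N.mul_mem (N.mul_mem (N.inv_mem ha) hc) ha
      simpa [mul_assoc] using this
    refine Finset.sum_bij' (fun h _ => (n : H)⁻¹ * h * n) (fun h _ => (n : H) * h * (n : H)⁻¹)
      ?_ ?_ ?_ ?_ ?_
    · intro h hh
      simp only [Finset.mem_filter, Finset.mem_univ, true_and] at hh ⊢
      simpa using hmem _ (N.inv_mem n.2) h hh
    · intro h hh
      simp only [Finset.mem_filter, Finset.mem_univ, true_and] at hh ⊢
      exact hmem _ n.2 h hh
    · intro h _; simp [mul_assoc]
    · intro h _; simp [mul_assoc]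
    · intro h _
      have := hF _ (N.inv_mem n.2) h
      rw [inv_inv] at this
      rw [this]
  rw [hT]
  have h2 : (Nat.card N : ℂ) * (∑ h ∈ Finset.univ.filter (fun h : H => h ∉ N),
        if h * x = x * h then F h else 0) =
      ∑ n : N, ∑ h ∈ Finset.univ.filter (fun h : H => h ∉ N),
        if ((n : H)⁻¹ * h * n) * x = x * ((n : H)⁻¹ * h * n) then F h else 0 := by
    rw [Finset.sum_congr rfl (fun n _ => (h1 n).symm)]
    simp [Nat.card_eq_fintype_card]
  rw [h2, Finset.sum_comm, Finset.mul_sum]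
  refine Finset.sum_congr rfl fun h hh => ?_
  simp only [Finset.mem_filter, Finset.mem_univ, true_and] at hh
  rw [aux_count N hodd hidx x hx2 hxN h hh, ← Finset.sum_filter, Finset.sum_const, nsmul_eq_mul]

/-- Let `N ⊴ H` of odd order and index 2, `x ∈ H` an involution, and
`θ ∈ Irr(N)` with `θ^x = θ̄ ≠ θ`. Then `ε(θ^H) = (1/|C_N(x)|) ∑_{y ∈ C_N(x)} θ(y)`;
in particular this sum is a real number. -/
theorem stmt6 {H : Type} [Group H] [Fintype H] (N : Subgroup H) [N.Normal]
    (hodd : Odd (Nat.card N)) (hidx : N.index = 2)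
    (x : H) (hx2 : x ^ 2 = 1) (hx1 : x ≠ 1)
    (θ : ↥N → ℂ) (hθ : IsIrrChar ↥N θ)
    (hconj : conjChar N θ x = starChar θ) (hnr : starChar θ ≠ θ) :
    FS H (indChar N θ) =
      (∑ n ∈ Finset.univ.filter (fun n : ↥N => (n : H) * x = x * (n : H)), θ n) /
        ((Finset.univ.filter (fun n : ↥N => (n : H) * x = x * (n : H))).card : ℂ) ∧
    ∃ r : ℝ, (∑ n ∈ Finset.univ.filter (fun n : ↥N => (n : H) * x = x * (n : H)), θ n) = (r : ℂ) := by
  have hxN : x ∉ N := by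
    intro hx
    have h1 := aux_pow_card N x hx
    rw [aux_odd_pow hodd x hx2] at h1
    exact hx1 h1
  obtain ⟨k, hk⟩ := aux_root N hodd
  have hxi : x⁻¹ = x := inv_eq_of_mul_eq_one_left (by rw [← sq, hx2])
  have hreal : ∀ n : N, (n : H) * x = x * (n : H) → (starRingEnd ℂ) (θ n) = θ n := by
    intro n hn
    have h1 := congrFun hconj n
    have h2 : x * (n : H) * x⁻¹ = n := by rw [← hn]; group
    simp only [conjChar, starChar, h2] at h1
    rw [← h1]; simp
  have hcard : (Nat.card N : ℂ) ≠ 0 := by exact_mod_cast Nat.card_pos.ne'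
  have hHcard : (Fintype.card H : ℂ) ≠ 0 := by exact_mod_cast Fintype.card_ne_zero
  constructor
  · have hC : ((Finset.univ.filter (fun n : ↥N => (n : H) * x = x * (n : H))).card : ℂ) ≠ 0 := by
      have : (1 : N) ∈ Finset.univ.filter (fun n : ↥N => (n : H) * x = x * (n : H)) := by simp
      exact_mod_cast (Finset.card_pos.2 ⟨_, this⟩).ne'
    -- step 1
    have hFS : FS H (indChar N θ) = (∑ h : H, ext0 N θ (h ^ 2)) / (Nat.card N : ℂ) := by
      have h1 : ∑ g : H, ∑ s : H, ext0 N θ (s * g ^ 2 * s⁻¹) =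
          (Fintype.card H : ℂ) * ∑ h : H, ext0 N θ (h ^ 2) := by
        rw [Finset.sum_comm]
        have : ∀ s : H, ∑ g : H, ext0 N θ (s * g ^ 2 * s⁻¹) = ∑ h : H, ext0 N θ (h ^ 2) := by
          intro s
          refine Fintype.sum_equiv (MulAut.conj s).toEquiv _ _ fun g => ?_
          simp [← conj_pow]
        simp [this]
      unfold FS indChar
      rw [← Finset.sum_div]
      change (∑ g : H, ∑ s : H, ext0 N θ (s * g ^ 2 * s⁻¹)) / _ / _ = _
      rw [h1]
      field_simp
    have hsq : ∀ n : N, ((n ^ k) ^ 2 : N) = n := fun n => Subtype.ext (by simpa using hk n n.2)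
    have hk' : ∀ n : N, ((n ^ 2) ^ k : N) = n := fun n => by
      rw [← pow_mul, mul_comm, pow_mul, hsq]
    -- step 2
    have hN0 : ∑ h ∈ Finset.univ.filter (fun h : H => h ∈ N), ext0 N θ (h ^ 2) = 0 := by
      rw [← aux_sum_zero θ hθ hnr]
      refine Finset.sum_bij' (fun h hh => (⟨h, by simpa using hh⟩ : N) ^ 2)
        (fun n _ => ((n ^ k : N) : H)) ?_ ?_ ?_ ?_ ?_
      · intro h hh; simp
      · intro n _; simp only [Finset.mem_filter, Finset.mem_univ, true_and]; exact SetLike.coe_mem _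
      · intro h hh; rw [hk']
      · intro n _; exact hsq n
      · intro h hh
        have hh' : h ∈ N := by simpa using hh
        unfold ext0
        rw [dif_pos (N.pow_mem hh' 2)]
        rfl
    have hF : ∀ n ∈ N, ∀ h, ext0 N θ ((n * h * n⁻¹) ^ 2) = ext0 N θ (h ^ 2) := by
      intro n hn h
      have hm := Subgroup.sq_mem_of_index_two hidx h
      have hm' := Subgroup.sq_mem_of_index_two hidx (n * h * n⁻¹)
      unfold ext0
      rw [dif_pos hm, dif_pos hm', ← aux_class θ hθ ⟨h ^ 2, hm⟩ ⟨n, hn⟩]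
      congr 1
      exact Subtype.ext (by simp [conj_pow])
    have hkey := aux_key N hodd hidx x hx2 hxN (fun h => ext0 N θ (h ^ 2)) hF
    have hsum : ∑ n ∈ Finset.univ.filter (fun n : ↥N => (n : H) * x = x * (n : H)),
        ext0 N θ ((n * x) ^ 2) =
        ∑ n ∈ Finset.univ.filter (fun n : ↥N => (n : H) * x = x * (n : H)), θ n := by
      refine Finset.sum_bij' (fun n _ => n ^ 2) (fun n _ => n ^ k) ?_ ?_ ?_ ?_ ?_
      · intro n hn
        simp only [Finset.mem_filter, Finset.mem_univ, true_and] at hn ⊢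
        exact Commute.pow_left hn 2
      · intro n hn
        simp only [Finset.mem_filter, Finset.mem_univ, true_and] at hn ⊢
        exact Commute.pow_left hn k
      · intro n _; exact hk' n
      · intro n _; exact hsq n
      · intro n hn
        simp only [Finset.mem_filter, Finset.mem_univ, true_and] at hn
        have e : ((n : H) * x) ^ 2 = ((n ^ 2 : N) : H) := by
          rw [Commute.mul_pow hn, hx2, mul_one]; rfl
        unfold ext0
        rw [e, dif_pos (SetLike.coe_mem _)]
    simp only [hsum] at hkey
    rw [hFS, ← Finset.sum_filter_add_sum_filter_not Finset.univ (fun h : H => h ∈ N), hN0, zero_add,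
      div_eq_div_iff hcard hC, mul_comm, hkey, mul_comm]
  · apply Complex.conj_eq_iff_real.1
    rw [map_sum]
    refine Finset.sum_congr rfl fun n hn => ?_
    simp only [Finset.mem_filter, Finset.mem_univ, true_and] at hn
    exact hreal n hn
end
end

section
/- Let G be a finite group with a normal subgroup N, let θ ∈ Irr(N) with θ̄ ≠ θ, and let T := {g ∈ G : θ^g = θ} be the inertia group of θ in G. Suppose |G : T| = 2 and θ^s = θ̄ for some s ∈ G ∖ T. Then ∑_{g ∈ T} θ^G(g²) = 0; equivalently, ε(θ^G) = (1/|G|) ∑_{g ∈ G∖T} θ^G(g²). -/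
open scoped BigOperators
attribute [local instance] Classical.propDecidable

noncomputable section

open scoped ComplexOrder in
theorem aux_conj_s9 {H V : Type} [Group H] [Fintype H] [AddCommGroup V] [Module ℂ V]
    [FiniteDimensional ℂ V] (ρ : Representation ℂ H V) (h : H) :
    ρ.character h⁻¹ = (starRingEnd ℂ) (ρ.character h) := by
  classical
  let b := Module.finBasis ℂ V
  let R : H → Matrix _ _ ℂ := fun g => LinearMap.toMatrix b b (ρ g)
  have hmul : ∀ g k, R (g * k) = R g * R k := fun g k => by
    simp only [R, map_mul, LinearMap.toMatrix_mul]
  have h1 : R 1 = 1 := by simp [R]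
  let M := ∑ g : H, (R g).conjTranspose * R g
  have hM : M.PosDef := by
    refine Matrix.posDef_sum ⟨(1 : H), Finset.mem_univ _⟩ fun g _ => ?_
    apply Matrix.PosDef.conjTranspose_mul_self
    apply Matrix.mulVec_injective_of_isUnit
    exact IsUnit.of_mul_eq_one (R g⁻¹) (by rw [← hmul, mul_inv_cancel, h1])
  have hinv : (R h).conjTranspose * M * R h = M := by
    simp only [M, Finset.mul_sum, Finset.sum_mul]
    refine Fintype.sum_equiv (Equiv.mulRight h) _ _ fun g => ?_
    simp only [Equiv.coe_mulRight, hmul, Matrix.conjTranspose_mul, Matrix.mul_assoc]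
  have hMu : IsUnit M.det := (Matrix.isUnit_iff_isUnit_det _).1 hM.isUnit
  have e : R h⁻¹ = M⁻¹ * (R h).conjTranspose * M := by
    have : (R h).conjTranspose * M = M * R h⁻¹ := by
      calc (R h).conjTranspose * M = (R h).conjTranspose * M * R h * R h⁻¹ := by
            rw [Matrix.mul_assoc _ (R h), ← hmul, mul_inv_cancel, h1, Matrix.mul_one]
        _ = _ := by rw [hinv]
    rw [Matrix.mul_assoc, this, Matrix.nonsing_inv_mul_cancel_left _ _ hMu]
  have t : ∀ g, ρ.character g = (R g).trace := fun g =>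
    LinearMap.trace_eq_matrix_trace ℂ b (ρ g)
  rw [t, t, e, Matrix.mul_assoc, Matrix.trace_mul_comm, Matrix.mul_assoc,
    Matrix.mul_nonsing_inv _ hMu, Matrix.mul_one, Matrix.trace_conjTranspose]
  rfl

open CategoryTheory in
theorem aux_sq {H : Type} [Group H] [Fintype H] (V : FDRep ℂ H) (hV : Simple V)
    (hn : starChar V.character ≠ V.character) :
    ∑ h : H, V.character h * V.character h = 0 := by
  have hc : (Nat.card H : ℂ) ≠ 0 := by simp
  letI := invertibleOfNonzero hc
  let W : FDRep ℂ H := FDRep.of (Representation.dual V.ρ)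
  have hW : ∀ g, W.character g = V.character g⁻¹ := fun g => FDRep.char_dual V g
  have hWs : Simple W := by
    rw [FDRep.simple_iff_char_is_norm_one]
    rw [FDRep.simple_iff_char_is_norm_one] at hV
    simp only [hW]
    rw [← hV]
    exact Finset.sum_congr rfl fun g _ => by rw [inv_inv, mul_comm]
  have key := FDRep.char_orthonormal V W
  rw [if_neg] at key
  · simpa [hW, hc] using key
  · rintro ⟨i⟩
    apply hn
    have := FDRep.char_iso i
    funext g
    have h2 := congrFun this g
    rw [hW] at h2
    exact (aux_conj_s9 V.ρ g).symm.trans h2.symm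

open TensorProduct in
theorem aux_tensor {H V : Type} [Group H] [Fintype H] [AddCommGroup V] [Module ℂ V]
    [FiniteDimensional ℂ V] (ρ σ : Representation ℂ H V)
    (h0 : ∑ h : H, σ.character h * ρ.character h = 0) (C : V →ₗ[ℂ] V) :
    ∑ h : H, LinearMap.trace ℂ V (σ h * C * ρ h) = 0 := by
  have hc : (Nat.card H : ℂ) ≠ 0 := by simp
  have hc' : (Fintype.card H : ℂ) ≠ 0 := by simp
  letI := invertibleOfNonzero hc
  letI := invertibleOfNonzero hc'
  let τ := Representation.tprod σ ρ
  have hf := Representation.card_inv_mul_sum_char_eq_finrank τ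
  have : ∑ g : H, τ.character g = 0 := by
    rw [← h0]; simp [τ, Representation.char_tensor]
  rw [this, mul_zero] at hf
  have hb : Representation.invariants τ = ⊥ := by
    rw [← Submodule.finrank_eq_zero (R := ℂ)]
    exact_mod_cast hf.symm
  have hsum : ∑ g : H, τ g = 0 := by
    ext1
    ext x y
    have : (∑ g : H, τ g) (x ⊗ₜ y) ∈ Representation.invariants τ := by
      intro k
      simp only [LinearMap.sum_apply, map_sum]
      refine Fintype.sum_equiv (Equiv.mulLeft k) _ _ fun g => ?_
      simp [map_mul]
    rw [hb] at this
    simpa using this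
  have hs2 : ∑ g : H, (σ g) ⊗ₜ[ℂ] (ρ g) = 0 := by
    apply (homTensorHomEquiv ℂ V V V V).injective
    rw [map_sum, map_zero, ← hsum]
    refine Finset.sum_congr rfl fun g _ => ?_
    rw [homTensorHomEquiv_apply]
    rfl
  let B : (V →ₗ[ℂ] V) →ₗ[ℂ] (V →ₗ[ℂ] V) →ₗ[ℂ] ℂ :=
    ((LinearMap.mul ℂ (Module.End ℂ V)).comp (LinearMap.mulRight ℂ (C : Module.End ℂ V))).compr₂
      (LinearMap.trace ℂ V)
  have := congrArg (TensorProduct.lift B) hs2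
  rw [map_sum, map_zero] at this
  rw [← this]
  rfl

theorem aux_main {G : Type} [Group G] [Fintype G] (N : Subgroup G) [N.Normal]
    (θ : ↥N → ℂ) (hθ : IsIrrChar ↥N θ) (hnr : starChar θ ≠ θ)
    (t : G) (ht : conjChar N θ t = θ) :
    ∑ n : N, (if h : (t * n) ^ 2 ∈ N then θ ⟨(t * n) ^ 2, h⟩ else 0) = 0 := by
  obtain ⟨V, hV, rfl⟩ := hθ
  have hiff : ∀ n : N, (t * n) ^ 2 = (t * n * t⁻¹) * (t ^ 2) * n := fun n => by
    rw [pow_two, pow_two]; group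
  by_cases h2 : t ^ 2 ∈ N
  · let φ : N →* N := (MulAut.conjNormal t : N ≃* N).toMonoidHom
    have hφ : ∀ n, ((φ n : N) : G) = t * n * t⁻¹ := fun n => MulAut.conjNormal_apply t n
    have hch : ∀ n, V.character (φ n) = V.character n := fun n => by
      have := congrFun ht n
      unfold conjChar at this
      rw [dif_pos (by rw [← hφ]; exact (φ n).2)] at this
      rw [← this]
      congr 1
    have h0 := aux_sq V hV hnr
    have := aux_tensor V.ρ (V.ρ.comp φ) (by
      rw [← h0]
      refine Finset.sum_congr rfl fun n _ => ?_
      congr 1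
      exact hch n) (V.ρ ⟨t ^ 2, h2⟩)
    rw [← this]
    refine Finset.sum_congr rfl fun n _ => ?_
    have e : (t * n) ^ 2 = ((φ n * ⟨t ^ 2, h2⟩ * n : N) : G) := by
      rw [hiff, ← hφ]; rfl
    rw [dif_pos (by rw [e]; exact Subtype.property _)]
    have : V.character (φ n * ⟨t ^ 2, h2⟩ * n) = LinearMap.trace ℂ V ((V.ρ.comp φ) n * V.ρ ⟨t ^ 2, h2⟩ * V.ρ n) := by
      unfold FDRep.character
      rw [map_mul V.ρ, map_mul V.ρ]; rfl
    rw [← this]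
    congr 1
    exact Subtype.ext e
  · refine Finset.sum_eq_zero fun n _ => dif_neg fun h => h2 ?_
    rw [hiff] at h
    have h3 := (N.mul_mem_cancel_right n.2).1 h
    exact (N.mul_mem_cancel_left (Subgroup.Normal.conj_mem inferInstance _ n.2 t)).1 h3

/-- Let `N ⊴ G`, `θ ∈ Irr(N)` with `θ̄ ≠ θ`, and let `T` be the inertia group
of `θ` in `G`. If `|G : T| = 2` and `θ^s = θ̄` for some `s ∈ G ∖ T`, then
`∑_{g ∈ T} θ^G(g²) = 0`; equivalently, `ε(θ^G) = (1/|G|) ∑_{g ∈ G∖T} θ^G(g²)`. -/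
theorem stmt9 {G : Type} [Group G] [Fintype G] (N : Subgroup G) [N.Normal]
    (θ : ↥N → ℂ) (hθ : IsIrrChar ↥N θ) (hnr : starChar θ ≠ θ)
    (T : Subgroup G) (hT : ∀ g : G, g ∈ T ↔ conjChar N θ g = θ) (hidx : T.index = 2)
    (s : G) (hs : s ∉ T) (hconj : conjChar N θ s = starChar θ) :
    (∑ g ∈ Finset.univ.filter (fun g : G => g ∈ T), indChar N θ (g ^ 2)) = 0 ∧
    FS G (indChar N θ) =
      (∑ g ∈ Finset.univ.filter (fun g : G => g ∉ T), indChar N θ (g ^ 2)) /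
        (Fintype.card G : ℂ) := by
  have hTn : T.Normal := Subgroup.normal_of_index_eq_two hidx
  have hNT : N ≤ T := by
    intro m hm
    rw [hT]
    obtain ⟨V, hV, rfl⟩ := hθ
    funext n
    unfold conjChar
    rw [dif_pos (Subgroup.Normal.conj_mem inferInstance _ n.2 m)]
    exact FDRep.char_conj V n ⟨m, hm⟩
  let F : G → ℂ := fun g => if h : g ∈ N then θ ⟨g, h⟩ else 0
  let A : ℂ := ∑ g ∈ Finset.univ.filter (fun g : G => g ∈ T), F (g ^ 2)
  have hA : A = 0 := by
    have h1 : ∀ n : N, A = ∑ g ∈ Finset.univ.filter (fun g : G => g ∈ T), F ((g * n) ^ 2) := by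
      intro n
      symm
      refine Finset.sum_equiv (Equiv.mulRight (n : G)) (fun g => ?_) (fun g _ => rfl)
      simp [T.mul_mem_cancel_right (hNT n.2)]
    have h2 : ∑ n : N, A = 0 := by
      rw [Finset.sum_congr rfl fun n _ => h1 n, Finset.sum_comm]
      refine Finset.sum_eq_zero fun g hg => ?_
      exact aux_main N θ hθ hnr g ((hT g).1 (Finset.mem_filter.1 hg).2)
    simpa using h2
  have main : (∑ g ∈ Finset.univ.filter (fun g : G => g ∈ T), indChar N θ (g ^ 2)) = 0 := by
    unfold indChar
    rw [← Finset.sum_div, Finset.sum_comm, Finset.sum_eq_zero, zero_div]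
    intro x _
    refine Eq.trans ?_ hA
    refine Finset.sum_equiv (MulAut.conj x).toEquiv (fun g => ?_) (fun g _ => ?_)
    · simp only [Finset.mem_filter, Finset.mem_univ, true_and]
      constructor
      · intro h; exact hTn.conj_mem _ h x
      · intro h
        have := hTn.conj_mem _ h x⁻¹
        simpa [mul_assoc] using this
    · have : ((MulAut.conj x).toEquiv g) ^ 2 = x * g ^ 2 * x⁻¹ := by
        simp
      simp only [F, this]
  refine ⟨main, ?_⟩
  unfold FS
  rw [← Finset.sum_filter_add_sum_filter_not Finset.univ (fun g : G => g ∈ T), main, zero_add]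
end
end

section
/- Let E be a finite 2-group, D ≤ E a subgroup of index 2, Q a cyclic group of order 3, and G = Q ⋊ E the semidirect product in which D acts trivially on Q and every element of E∖D acts on Q by inversion. Fix a nontrivial irreducible character θ of Q, and for λ ∈ Irr(D) let χ_λ := (θ × λ)^G be the character of G induced from the irreducible character θ × λ of the subgroup Q × D. Then for every λ ∈ Irr(D), the Frobenius–Schur indicator of χ_λ is given by the Gow indicator of λ: ε(χ_λ) = (1/|D|) ∑_{e ∈ E∖D} λ(e²). -/
open scoped BigOperators
attribute [local instance] Classical.propDecidable

noncomputable section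

instance semidirectProductFintype {N G : Type} [Group N] [Group G] [Fintype N] [Fintype G]
    (φ : G →* MulAut N) : Fintype (N ⋊[φ] G) :=
  Fintype.ofEquiv (N × G)
    { toFun := fun p => ⟨p.1, p.2⟩
      invFun := fun x => (x.left, x.right)
      left_inv := fun _ => rfl
      right_inv := fun _ => rfl }

lemma irr_comm_char {Q : Type} [Group Q] [Fintype Q] (hc : ∀ a b : Q, a * b = b * a)
    (θ : Q → ℂ) (hθ : IsIrrChar Q θ) : θ 1 = 1 ∧ ∀ a b, θ (a * b) = θ a * θ b := by
  obtain ⟨V, hV, rfl⟩ := hθ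
  have key : ∀ q : Q, ∃ c : ℂ, V.ρ q = c • LinearMap.id := by
    intro q
    let f : V ⟶ V :=
      { hom := Action.ρ V q
        comm := by
          intro g
          have h := congrArg (Action.ρ V) (hc q g)
          rw [map_mul, map_mul] at h
          exact h }
    obtain ⟨c, hcf⟩ := CategoryTheory.endomorphism_simple_eq_smul_id ℂ f
    refine ⟨c, ?_⟩
    have h2 := congrArg (fun g : V ⟶ V => g.hom.hom.hom) hcf
    exact h2.symm
  choose c hcc using key
  set n : ℂ := (Module.finrank ℂ V : ℂ) with hn
  have hchar : ∀ q, V.character q = c q * n := by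
    intro q
    simp [FDRep.character, hcc q, hn]
  have hmul : ∀ a b, V.character (a * b) = c a * c b * n := by
    intro a b
    rw [FDRep.character, map_mul, hcc a, hcc b]
    simp [hn, mul_assoc, ← Module.End.one_eq_id]
    ring
  have h1 : V.character 1 = n := by simp [hn]
  have hn1 : n * n = 1 := by
    have hne : (Nat.card Q : ℂ) ≠ 0 := by exact_mod_cast Nat.card_pos.ne'
    haveI : Invertible (Nat.card Q : ℂ) := invertibleOfNonzero hne
    have ho := FDRep.char_orthonormal V V
    rw [if_pos ⟨CategoryTheory.Iso.refl V⟩] at ho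
    have : ∀ g : Q, V.character g * V.character g⁻¹ = n * n := by
      intro g
      have := hmul g g⁻¹
      rw [mul_inv_cancel, h1] at this
      rw [hchar, hchar]
      linear_combination (-n) * this
    simp only [this] at ho
    rw [Finset.sum_const, Finset.card_univ, ← Nat.card_eq_fintype_card, nsmul_eq_mul,
      inv_mul_cancel_left₀ hne] at ho
    simpa using ho
  have hn2 : n = 1 := by
    have : (Module.finrank ℂ V) * (Module.finrank ℂ V) = 1 := by
      rw [hn] at hn1
      exact_mod_cast hn1
    rw [hn, Nat.eq_one_of_mul_eq_one_right this]; simp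
  refine ⟨h1.trans hn2, fun a b => ?_⟩
  rw [hmul, hchar, hchar, hn2]; ring

lemma sum_lin_char {Q : Type} [Group Q] [Fintype Q] (θ : Q → ℂ)
    (hm : ∀ a b, θ (a * b) = θ a * θ b) (hθ1 : θ ≠ fun _ => 1) : ∑ q, θ q = 0 := by
  obtain ⟨a, ha⟩ := Function.ne_iff.1 hθ1
  have h : ∑ q, θ (a * q) = ∑ q, θ q := Equiv.sum_comp (Equiv.mulLeft a) θ
  simp only [hm, ← Finset.mul_sum] at h
  have : (θ a - 1) * ∑ q, θ q = 0 := by rw [sub_mul, h]; ring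
  exact (mul_eq_zero.1 this).resolve_left (sub_ne_zero.2 ha)

lemma FS_indChar {G : Type} [Group G] [Fintype G] (H : Subgroup G) (θ : ↥H → ℂ) :
    FS G (indChar H θ) =
      (∑ g : G, if h : g ^ 2 ∈ H then θ ⟨g ^ 2, h⟩ else 0) / (Nat.card H : ℂ) := by
  have hG : (Fintype.card G : ℂ) ≠ 0 := by exact_mod_cast Fintype.card_ne_zero
  let F : G → ℂ := fun g => if h : g ∈ H then θ ⟨g, h⟩ else 0
  have hF : ∀ s : G, ∑ g : G, F (s * g ^ 2 * s⁻¹) = ∑ g : G, F (g ^ 2) := by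
    intro s
    rw [← (MulAut.conj s).toEquiv.sum_comp (fun g => F (g ^ 2))]
    simp
  change (∑ g : G, (∑ s : G, F (s * g ^ 2 * s⁻¹)) / (Nat.card H : ℂ)) / _ =
    (∑ g : G, F (g ^ 2)) / _
  rw [← Finset.sum_div, Finset.sum_comm]
  simp only [hF]
  rw [Finset.sum_const, Finset.card_univ, nsmul_eq_mul]
  field_simp

/-- Let `E` be a finite 2-group, `D ≤ E` of index 2, `Q` cyclic of order 3 and
`G = Q ⋊ E` where `D` centralizes `Q` and `E∖D` inverts `Q`. Fix a nontrivial `θ ∈ Irr(Q)` and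
for `λ ∈ Irr(D)` let `χ_λ = (θ × λ)^G`, induced from the subgroup `Q ⋊ D = Q × D`. Then
`ε(χ_λ) = (1/|D|) ∑_{e ∈ E∖D} λ(e²)`, the Gow indicator of `λ`. -/
theorem stmt11 {Q E : Type} [Group Q] [Group E] [Fintype Q] [Fintype E]
    (hQcyc : IsCyclic Q) (hQ3 : Fintype.card Q = 3) (hE2 : IsPGroup 2 E)
    (D : Subgroup E) (hD : D.index = 2)
    (φ : E →* MulAut Q) (hφD : ∀ d : E, d ∈ D → φ d = 1)
    (hφinv : ∀ e : E, e ∉ D → ∀ q : Q, φ e q = q⁻¹)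
    (θ : Q → ℂ) (hθ : IsIrrChar Q θ) (hθ1 : θ ≠ fun _ => 1)
    (lam : ↥D → ℂ) (hlam : IsIrrChar ↥D lam) :
    FS (Q ⋊[φ] E) (indChar (Subgroup.comap (SemidirectProduct.rightHom : Q ⋊[φ] E →* E) D)
        (fun g => θ (g : Q ⋊[φ] E).left *
          lam ⟨SemidirectProduct.rightHom (g : Q ⋊[φ] E), g.2⟩)) =
      (∑ e ∈ Finset.univ.filter (fun e : E => e ∉ D),
        lam ⟨e ^ 2, Subgroup.sq_mem_of_index_two hD e⟩) / (Nat.card D : ℂ) := by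
  have hcomm : ∀ a b : Q, a * b = b * a := fun a b => by
    let _ := IsCyclic.commGroup (α := Q)
    exact mul_comm a b
  obtain ⟨hθ0, hm⟩ := irr_comm_char hcomm θ hθ
  have hsum := sum_lin_char θ hm hθ1
  have hsq : ∑ q : Q, θ (q * q) = 0 := by
    rw [← hsum]
    have hinj : Function.Injective (fun q : Q => q * q) := by
      have hpow : ∀ q : Q, q * q = q⁻¹ := by
        intro q
        have : q ^ 3 = 1 := hQ3 ▸ pow_card_eq_one
        rw [eq_inv_iff_mul_eq_one, ← this, pow_succ, pow_two]
      intro a b hab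
      simpa [hpow] using hab
    exact (Equiv.ofBijective _ (Finite.injective_iff_bijective.1 hinj)).sum_comp θ
  rw [FS_indChar]
  have hmem : ∀ g : Q ⋊[φ] E,
      g ^ 2 ∈ Subgroup.comap (SemidirectProduct.rightHom : Q ⋊[φ] E →* E) D := by
    intro g
    rw [Subgroup.mem_comap, map_pow]
    exact Subgroup.sq_mem_of_index_two hD _
  have hcard : Nat.card (Subgroup.comap (SemidirectProduct.rightHom : Q ⋊[φ] E →* E) D)
      = 3 * Nat.card D := by
    have h1 := Subgroup.card_mul_index
      (Subgroup.comap (SemidirectProduct.rightHom : Q ⋊[φ] E →* E) D)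
    have h2 := Subgroup.card_mul_index D
    rw [Subgroup.index_comap_of_surjective _ SemidirectProduct.rightHom_surjective, hD,
      SemidirectProduct.card, Nat.card_eq_fintype_card (α := Q), hQ3] at h1
    rw [hD] at h2
    omega
  let L : E → ℂ := fun e => lam ⟨e ^ 2, Subgroup.sq_mem_of_index_two hD e⟩
  have hterm : ∀ (q : Q) (e : E),
      (if h : (⟨q, e⟩ : Q ⋊[φ] E) ^ 2 ∈
          Subgroup.comap (SemidirectProduct.rightHom : Q ⋊[φ] E →* E) D then
        θ ((⟨q, e⟩ : Q ⋊[φ] E) ^ 2).left *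
          lam ⟨SemidirectProduct.rightHom ((⟨q, e⟩ : Q ⋊[φ] E) ^ 2), h⟩ else 0)
      = θ (q * φ e q) * L e := by
    intro q e
    rw [dif_pos (hmem _)]
    congr 2
    · rw [pow_two]; rfl
    · apply Subtype.ext
      change SemidirectProduct.rightHom ((⟨q, e⟩ : Q ⋊[φ] E) ^ 2) = e ^ 2
      rw [map_pow]; rfl
  let eqv : Q × E ≃ Q ⋊[φ] E :=
    { toFun := fun p => ⟨p.1, p.2⟩
      invFun := fun x => (x.left, x.right)
      left_inv := fun _ => rfl
      right_inv := fun _ => rfl }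
  rw [← eqv.sum_comp, Fintype.sum_prod_type_right]
  have hinner : ∀ e : E, ∑ q : Q, θ (q * φ e q) * L e = if e ∉ D then 3 * L e else 0 := by
    intro e
    rw [← Finset.sum_mul]
    by_cases he : e ∈ D
    · simp [he, hφD e he, hsq]
    · simp [he, hφinv e he, hθ0, hQ3]
  have hfin : ∀ e : E, (∑ q : Q, (if h : (eqv (q, e)) ^ 2 ∈
          Subgroup.comap (SemidirectProduct.rightHom : Q ⋊[φ] E →* E) D then
        θ ((eqv (q, e)) ^ 2).left *
          lam ⟨SemidirectProduct.rightHom ((eqv (q, e)) ^ 2), h⟩ else 0)) =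
      if e ∉ D then 3 * L e else 0 := by
    intro e
    rw [← hinner e]
    exact Finset.sum_congr rfl fun q _ => hterm q e
  have hD0 : (Nat.card D : ℂ) ≠ 0 := by exact_mod_cast Nat.card_pos.ne'
  refine (congrArg (· / _) (Finset.sum_congr rfl fun e _ => hfin e)).trans ?_
  rw [← Finset.sum_filter, ← Finset.mul_sum, hcard]
  push_cast
  rw [mul_div_mul_left _ _ (by norm_num)]
end
end
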